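/- arXiv:2102.07394 — 4 statements merged into one kernel-verified Lean document; each statement's English description precedes it below -/
import Mathlib

section
/- Let (l,m,k) be an admissible triple with r = (l+m−k)/2. Then for every integer N ≥ 2 one has 0 < θ_{q(N)}(k,l,m) ≤ [k+1]_{q(N)}·N^r. (This is the statement that t_N := √(θ_q(k,l,m)/([k+1]_q N^r)) lies in (0,1], i.e. that t_N is the norm ‖(p_l⊗p_m)γ^{l,m}_k ξ‖ of a projection applied to a unit vector.) -/
open scoped BigOperators

/-- `q(N) = 2/(N + √(N²−4))`, so that `0 < q ≤ 1` and `q + q⁻¹ = N` for `N ≥ 2`. -/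
noncomputable def qpar (N : ℕ) : ℝ := 2 / (N + Real.sqrt ((N : ℝ) ^ 2 - 4))

/-- The quantum integer `[n]_q = q^{n−1} + q^{n−3} + ⋯ + q^{−(n−1)}` (and `[0]_q = 0`). -/
noncomputable def qint (N n : ℕ) : ℝ :=
  ∑ j ∈ Finset.range n, qpar N ^ ((n : ℤ) - 1 - 2 * (j : ℤ))

/-- The quantum factorial `[n]_q! = [n]_q·[n−1]_q·⋯·[1]_q`, with `[0]_q! = 1`. -/
noncomputable def qfact (N n : ℕ) : ℝ := ∏ i ∈ Finset.range n, qint N (i + 1)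

/-- The theta-net `θ_q(k,l,m)` of an admissible triple, with `r = (l+m−k)/2`. -/
noncomputable def thetaNet (N k l m r : ℕ) : ℝ :=
  (qfact N r * qfact N (l - r) * qfact N (m - r) * qfact N (k + r + 1)) /
    (qfact N l * qfact N m * qfact N k)

/-!
All quantum-integer identities follow from the addition formula `[m+n] = qᵐ[n] + q⁻ⁿ[m]`. Write
`l = a + r`, `m = b + r`, `k = a + b` with `a`, `b` fixed. At `r = 0` the theta-net is `[k+1]`, and
passing from `r` to `r + 1` multiplies it by `[r+1][a+b+r+2] / ([a+r+1][b+r+1])`. This factor is at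
most `q + q⁻¹`, because `[a+s][b+s] = [s][a+b+s] + [a][b]` and `[n+2] ≤ (q + q⁻¹)[n+1]`.
-/

section QuantumIntegers

variable {K : Type*} [Field K]

/-- The quantum integer `[n]_q` for an arbitrary element `q` of a field. -/
def quantumInt (q : K) (n : ℕ) : K :=
  ∑ j ∈ Finset.range n, q ^ ((n : ℤ) - 1 - 2 * (j : ℤ))

/-- The quantum factorial `[n]_q!` for an arbitrary element `q` of a field. -/
def quantumFactorial (q : K) (n : ℕ) : K := ∏ i ∈ Finset.range n, quantumInt q (i + 1)

/-- The theta-net `θ_q(k,l,m)` for an arbitrary element `q` of a field. As in `thetaNet`, the number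
`r = (l+m−k)/2` is an argument of its own and `l - r`, `m - r` are truncated subtractions. -/
def quantumThetaNet (q : K) (k l m r : ℕ) : K :=
  (quantumFactorial q r * quantumFactorial q (l - r) * quantumFactorial q (m - r) *
      quantumFactorial q (k + r + 1)) /
    (quantumFactorial q l * quantumFactorial q m * quantumFactorial q k)

@[simp]
theorem quantumInt_one (q : K) : quantumInt q 1 = 1 := by simp [quantumInt]

theorem quantumInt_add {q : K} (hq : q ≠ 0) (m n : ℕ) :
    quantumInt q (m + n) = q ^ m * quantumInt q n + (q ^ n)⁻¹ * quantumInt q m := by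
  unfold quantumInt
  rw [add_comm m n, Finset.sum_range_add, Finset.mul_sum, Finset.mul_sum]
  congr 1 <;> refine Finset.sum_congr rfl fun j _ => ?_
  · rw [← zpow_natCast, ← zpow_add₀ hq]
    congr 1; push_cast; ring
  · rw [← zpow_natCast, ← zpow_neg, ← zpow_add₀ hq]
    congr 1; push_cast; ring

theorem quantumInt_succ {q : K} (hq : q ≠ 0) (n : ℕ) :
    quantumInt q (n + 1) = q * quantumInt q n + (q ^ n)⁻¹ := by
  simpa [add_comm] using quantumInt_add hq 1 n

theorem quantumInt_add_mul_quantumInt_add {q : K} (hq : q ≠ 0) (a b s : ℕ) :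
    quantumInt q (a + s) * quantumInt q (b + s) =
      quantumInt q s * quantumInt q (a + b + s) + quantumInt q a * quantumInt q b := by
  rw [add_assoc a b s, quantumInt_add hq a (b + s), quantumInt_add hq a s, add_comm b s,
    quantumInt_add hq s b]
  field_simp
  ring

@[simp]
theorem quantumFactorial_zero (q : K) : quantumFactorial q 0 = 1 := Finset.prod_range_zero _

theorem quantumFactorial_succ (q : K) (n : ℕ) :
    quantumFactorial q (n + 1) = quantumFactorial q n * quantumInt q (n + 1) :=
  Finset.prod_range_succ _ _

theorem quantumThetaNet_succ (q : K) (a b r : ℕ) :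
    quantumThetaNet q (a + b) (a + (r + 1)) (b + (r + 1)) (r + 1) =
      quantumThetaNet q (a + b) (a + r) (b + r) r *
        (quantumInt q (r + 1) * quantumInt q (a + b + r + 2) /
          (quantumInt q (a + r + 1) * quantumInt q (b + r + 1))) := by
  simp only [quantumThetaNet, Nat.add_sub_cancel]
  simp only [← add_assoc]
  rw [quantumFactorial_succ q r, quantumFactorial_succ q (a + r), quantumFactorial_succ q (b + r),
    quantumFactorial_succ q (a + b + r + 1), div_mul_div_comm]
  congr 1 <;> ring

end QuantumIntegers

section Positivity

variable {K : Type*} [Field K] [LinearOrder K] [IsStrictOrderedRing K] {q : K}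

theorem quantumInt_nonneg (hq : 0 ≤ q) (n : ℕ) : 0 ≤ quantumInt q n :=
  Finset.sum_nonneg fun _ _ => zpow_nonneg hq _

theorem quantumInt_succ_pos (hq : 0 < q) (n : ℕ) : 0 < quantumInt q (n + 1) :=
  Finset.sum_pos (fun _ _ => zpow_pos hq _) Finset.nonempty_range_add_one

theorem quantumFactorial_pos (hq : 0 < q) (n : ℕ) : 0 < quantumFactorial q n :=
  Finset.prod_pos fun i _ => quantumInt_succ_pos hq i

theorem quantumThetaNet_pos (hq : 0 < q) (k l m r : ℕ) : 0 < quantumThetaNet q k l m r := by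
  have hfact := quantumFactorial_pos hq
  exact div_pos (mul_pos (mul_pos (mul_pos (hfact _) (hfact _)) (hfact _)) (hfact _))
    (mul_pos (mul_pos (hfact _) (hfact _)) (hfact _))

theorem quantumInt_add_two_le (hq : 0 < q) (n : ℕ) :
    quantumInt q (n + 2) ≤ (q + q⁻¹) * quantumInt q (n + 1) := by
  have pow_inv_le : (q ^ n)⁻¹ ≤ quantumInt q (n + 1) := by
    rw [quantumInt_succ hq.ne']
    exact le_add_of_nonneg_left (mul_nonneg hq.le (quantumInt_nonneg hq.le n))
  calc quantumInt q (n + 2)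
      = q * quantumInt q (n + 1) + q⁻¹ * (q ^ n)⁻¹ := by
        rw [quantumInt_succ hq.ne', pow_succ', mul_inv]
    _ ≤ q * quantumInt q (n + 1) + q⁻¹ * quantumInt q (n + 1) := by gcongr
    _ = (q + q⁻¹) * quantumInt q (n + 1) := (add_mul _ _ _).symm

theorem quantumInt_mul_quantumInt_le (hq : 0 < q) (a b r : ℕ) :
    quantumInt q (r + 1) * quantumInt q (a + b + r + 2) ≤
      (q + q⁻¹) * (quantumInt q (a + r + 1) * quantumInt q (b + r + 1)) := by
  have nonneg := quantumInt_nonneg hq.le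
  calc quantumInt q (r + 1) * quantumInt q (a + b + r + 2)
      ≤ quantumInt q (r + 1) * ((q + q⁻¹) * quantumInt q (a + b + r + 1)) :=
        mul_le_mul_of_nonneg_left (quantumInt_add_two_le hq _) (nonneg _)
    _ = (q + q⁻¹) * (quantumInt q (r + 1) * quantumInt q (a + b + r + 1)) := mul_left_comm _ _ _
    _ ≤ (q + q⁻¹) * (quantumInt q (r + 1) * quantumInt q (a + b + r + 1) +
          quantumInt q a * quantumInt q b) := by
        gcongr
        exact le_add_of_nonneg_right (mul_nonneg (nonneg a) (nonneg b))
    _ = (q + q⁻¹) * (quantumInt q (a + r + 1) * quantumInt q (b + r + 1)) :=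
        congrArg _ (quantumInt_add_mul_quantumInt_add hq.ne' a b (r + 1)).symm

theorem quantumThetaNet_zero (hq : 0 < q) (a b : ℕ) :
    quantumThetaNet q (a + b) a b 0 = quantumInt q (a + b + 1) := by
  have hfact := fun n => (quantumFactorial_pos hq n).ne'
  have := hfact a
  have := hfact b
  have := hfact (a + b)
  simp only [quantumThetaNet, quantumFactorial_zero, Nat.sub_zero, add_zero, one_mul,
    quantumFactorial_succ]
  field_simp

theorem quantumThetaNet_le (hq : 0 < q) (a b r : ℕ) :
    quantumThetaNet q (a + b) (a + r) (b + r) r ≤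
      quantumInt q (a + b + 1) * (q + q⁻¹) ^ r := by
  induction r with
  | zero => simpa using (quantumThetaNet_zero hq a b).le
  | succ r ih =>
    have factor_le : quantumInt q (r + 1) * quantumInt q (a + b + r + 2) /
        (quantumInt q (a + r + 1) * quantumInt q (b + r + 1)) ≤ q + q⁻¹ :=
      (div_le_iff₀ (mul_pos (quantumInt_succ_pos hq _) (quantumInt_succ_pos hq _))).2
        (quantumInt_mul_quantumInt_le hq a b r)
    calc quantumThetaNet q (a + b) (a + (r + 1)) (b + (r + 1)) (r + 1)
        = quantumThetaNet q (a + b) (a + r) (b + r) r *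
            (quantumInt q (r + 1) * quantumInt q (a + b + r + 2) /
              (quantumInt q (a + r + 1) * quantumInt q (b + r + 1))) :=
          quantumThetaNet_succ q a b r
      _ ≤ quantumThetaNet q (a + b) (a + r) (b + r) r * (q + q⁻¹) :=
          mul_le_mul_of_nonneg_left factor_le (quantumThetaNet_pos hq _ _ _ _).le
      _ ≤ quantumInt q (a + b + 1) * (q + q⁻¹) ^ r * (q + q⁻¹) := by gcongr
      _ = quantumInt q (a + b + 1) * (q + q⁻¹) ^ (r + 1) := by rw [pow_succ, mul_assoc]

theorem thetaNet_pos_and_le_general (hq : 0 < q) {k l m r : ℕ}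
    (hadm : l + m = k + 2 * r) (hrl : r ≤ l) (hrm : r ≤ m) :
    0 < quantumThetaNet q k l m r ∧
      quantumThetaNet q k l m r ≤ quantumInt q (k + 1) * (q + q⁻¹) ^ r := by
  obtain ⟨a, rfl⟩ := Nat.exists_eq_add_of_le' hrl
  obtain ⟨b, rfl⟩ := Nat.exists_eq_add_of_le' hrm
  obtain rfl : k = a + b := by lia
  exact ⟨quantumThetaNet_pos hq _ _ _ _, quantumThetaNet_le hq a b r⟩

end Positivity

theorem qpar_pos {N : ℕ} (hN : N ≠ 0) : 0 < qpar N := by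
  unfold qpar
  positivity

theorem qpar_add_inv {N : ℕ} (hN : 2 ≤ N) : qpar N + (qpar N)⁻¹ = N := by
  have two_le : (2 : ℝ) ≤ N := by exact_mod_cast hN
  have sq_sqrt : √((N : ℝ) ^ 2 - 4) ^ 2 = (N : ℝ) ^ 2 - 4 := Real.sq_sqrt (by nlinarith)
  have denom_ne_zero : (N : ℝ) + √((N : ℝ) ^ 2 - 4) ≠ 0 := by positivity
  rw [qpar, inv_div]
  field_simp
  linear_combination sq_sqrt

/-- For an admissible triple `(l,m,k)` with `r = (l+m−k)/2` and every integer `N ≥ 2`,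
one has `0 < θ_q(k,l,m) ≤ [k+1]_q · N^r`. -/
theorem thetaNet_pos_and_le (k l m r N : ℕ)
    (hadm : l + m = k + 2 * r) (hrl : r ≤ l) (hrm : r ≤ m) (hN : 2 ≤ N) :
    0 < thetaNet N k l m r ∧ thetaNet N k l m r ≤ qint N (k + 1) * (N : ℝ) ^ r := by
  rw [← qpar_add_inv hN]
  exact thetaNet_pos_and_le_general (qpar_pos (by lia)) hadm hrl hrm
end

section
/- Let H and K be complex inner product spaces with H nontrivial, let γ : H → K be a linear isometry, let P be an orthogonal projection on K, and suppose there is a constant t with 0 < t ≤ 1 such that ‖P(γξ)‖ = t·‖ξ‖ for every ξ ∈ H. Then α := t⁻¹·P∘γ is a linear isometry from H to K, and the operator norm of α − γ is at most (t⁻¹ − 1) + √(1 − t²). -/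
/-!
Both `α = t⁻¹ P γ` and `γ` preserve norms, and `⟪α ξ, γ ξ⟫ = t⁻¹ ‖P γ ξ‖² = t ‖ξ‖²`: the vectors
`α ξ` and `γ ξ` have equal length and the angle between them has cosine `t`. Hence
`‖α ξ - γ ξ‖² = 2 (1 - t) ‖ξ‖²`, so that `‖α - γ‖ = √(2 (1 - t))` exactly. The stated estimate is
weaker, because `2 (1 - t) = (1 - t)² + (1 - t²)` and `0 ≤ 1 - t ≤ t⁻¹ - 1`.
-/

open RCLike
open scoped InnerProductSpace

theorem sqrt_two_mul_one_sub_le {t : ℝ} (ht0 : 0 < t) (ht1 : t ≤ 1) :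
    √(2 * (1 - t)) ≤ (t⁻¹ - 1) + √(1 - t ^ 2) := by
  have hsub : 0 ≤ 1 - t := sub_nonneg.2 ht1
  have hsq : 0 ≤ 1 - t ^ 2 := sub_nonneg.2 (pow_le_one₀ ht0.le ht1)
  have hinv : 1 - t ≤ t⁻¹ - 1 := by
    calc 1 - t
        ≤ t⁻¹ * (1 - t) := le_mul_of_one_le_left hsub ((one_le_inv₀ ht0).2 ht1)
      _ = t⁻¹ - 1 := by rw [mul_sub, mul_one, inv_mul_cancel₀ ht0.ne']
  refine Real.sqrt_le_iff.2 ⟨by linarith [Real.sqrt_nonneg (1 - t ^ 2)], ?_⟩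
  calc 2 * (1 - t)
      = (1 - t) ^ 2 + √(1 - t ^ 2) ^ 2 := by
        rw [Real.sq_sqrt hsq]
        ring
    _ ≤ (t⁻¹ - 1) ^ 2 + √(1 - t ^ 2) ^ 2 := by gcongr
    _ ≤ (t⁻¹ - 1 + √(1 - t ^ 2)) ^ 2 :=
        pow_add_pow_le (hsub.trans hinv) (Real.sqrt_nonneg _) two_ne_zero

theorem norm_inv_smul_eq_of_norm_eq_mul {𝕜 E F : Type*} [RCLike 𝕜] [Norm E]
    [SeminormedAddCommGroup F] [NormedSpace 𝕜 F] {t : ℝ} (ht : 0 < t) {x : E} {y : F}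
    (hxy : ‖y‖ = t * ‖x‖) : ‖(t : 𝕜)⁻¹ • y‖ = ‖x‖ := by
  rw [norm_smul, norm_inv, norm_of_nonneg ht.le, hxy, inv_mul_cancel_left₀ ht.ne']

section SymmetricProjection

variable {𝕜 H K : Type*} [RCLike 𝕜] [SeminormedAddCommGroup H] [InnerProductSpace 𝕜 H]
  [SeminormedAddCommGroup K] [InnerProductSpace 𝕜 K]

theorem norm_sub_eq_sqrt_mul_norm_of_re_inner_eq {x y : K} {t : ℝ} (hxy : ‖x‖ = ‖y‖)
    (hinner : re ⟪x, y⟫_𝕜 = t * ‖y‖ ^ 2) : ‖x - y‖ = √(2 * (1 - t)) * ‖y‖ := by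
  have hsq : ‖x - y‖ ^ 2 = 2 * (1 - t) * ‖y‖ ^ 2 := by
    rw [norm_sub_sq (𝕜 := 𝕜), hxy, hinner]
    ring
  rw [← Real.sqrt_sq (norm_nonneg (x - y)), hsq, Real.sqrt_mul' _ (sq_nonneg _),
    Real.sqrt_sq (norm_nonneg y)]

theorem re_inner_apply_self_eq_norm_sq {P : K →ₗ[𝕜] K} (hP : P.IsSymmetricProjection) (x : K) :
    re ⟪P x, x⟫_𝕜 = ‖P x‖ ^ 2 := by
  have hPP : P (P x) = P x := LinearMap.congr_fun hP.isIdempotentElem.eq x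
  rw [← inner_self_eq_norm_sq (𝕜 := 𝕜), ← hP.isSymmetric, hPP]

theorem norm_inv_smul_apply_sub_self {P : K →ₗ[𝕜] K} (hP : P.IsSymmetricProjection) {t : ℝ}
    (ht : 0 < t) {x : K} (hx : ‖P x‖ = t * ‖x‖) :
    ‖(t : 𝕜)⁻¹ • P x - x‖ = √(2 * (1 - t)) * ‖x‖ := by
  refine norm_sub_eq_sqrt_mul_norm_of_re_inner_eq (𝕜 := 𝕜)
    (norm_inv_smul_eq_of_norm_eq_mul ht hx) ?_
  calc re ⟪(t : 𝕜)⁻¹ • P x, x⟫_𝕜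
      = t⁻¹ * ‖P x‖ ^ 2 := by
        rw [← ofReal_inv, inner_smul_left, conj_ofReal, re_ofReal_mul,
          re_inner_apply_self_eq_norm_sq hP]
    _ = t * ‖x‖ ^ 2 := by
        rw [hx]
        field_simp

theorem rescaled_proj_comp_isometry_and_close_general [NontrivialTopology H] (γ : H →ₗᵢ[𝕜] K)
    (P : K →L[𝕜] K) (hP : P.IsSymmetricProjection) {t : ℝ} (ht : 0 < t)
    (hnorm : ∀ ξ, ‖P (γ ξ)‖ = t * ‖ξ‖) :
    (∀ ξ, ‖((t : 𝕜)⁻¹ • P.comp γ.toContinuousLinearMap) ξ‖ = ‖ξ‖) ∧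
      ‖(t : 𝕜)⁻¹ • P.comp γ.toContinuousLinearMap - γ.toContinuousLinearMap‖ =
        √(2 * (1 - t)) := by
  refine ⟨fun ξ => norm_inv_smul_eq_of_norm_eq_mul ht (hnorm ξ),
    ContinuousLinearMap.homothety_norm _ fun ξ => ?_⟩
  have hγ : ‖P (γ ξ)‖ = t * ‖γ ξ‖ := by rw [hnorm, γ.norm_map]
  rw [← γ.norm_map ξ]
  exact norm_inv_smul_apply_sub_self hP ht hγ

end SymmetricProjection

/-- Let `H` and `K` be complex inner product spaces with `H` nontrivial, `γ : H → K` a linear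
isometry, `P` an orthogonal projection on `K` (a continuous linear idempotent self-adjoint map),
and suppose `‖P(γξ)‖ = t·‖ξ‖` for every `ξ ∈ H` with a constant `0 < t ≤ 1`.  Then
`α := t⁻¹·P∘γ` is a linear isometry from `H` to `K`, and `‖α − γ‖ ≤ (t⁻¹ − 1) + √(1 − t²)`. -/
theorem rescaled_proj_comp_isometry_and_close
    {H K : Type*} [NormedAddCommGroup H] [InnerProductSpace ℂ H] [Nontrivial H]
    [NormedAddCommGroup K] [InnerProductSpace ℂ K]
    (γ : H →ₗᵢ[ℂ] K) (P : K →L[ℂ] K)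
    (hP2 : P.comp P = P)
    (hPsa : ∀ x y : K, (inner ℂ (P x) y : ℂ) = inner ℂ x (P y))
    (t : ℝ) (ht0 : 0 < t) (ht1 : t ≤ 1)
    (hnorm : ∀ ξ : H, ‖P (γ ξ)‖ = t * ‖ξ‖) :
    (∀ ξ : H, ‖(t⁻¹ • (P.comp γ.toContinuousLinearMap)) ξ‖ = ‖ξ‖) ∧
      ‖t⁻¹ • (P.comp γ.toContinuousLinearMap) - γ.toContinuousLinearMap‖ ≤
        (t⁻¹ - 1) + Real.sqrt (1 - t ^ 2) := by
  have hP : P.IsSymmetricProjection :=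
    ⟨ContinuousLinearMap.IsIdempotentElem.toLinearMap hP2, hPsa⟩
  obtain ⟨hiso, hdist⟩ := rescaled_proj_comp_isometry_and_close_general γ P hP ht0 hnorm
  rw [← Complex.coe_smul, Complex.ofReal_inv]
  exact ⟨hiso, hdist.trans_le (sqrt_two_mul_one_sub_le ht0 ht1)⟩
end

section
/- Let H_A and H_B be nontrivial finite-dimensional complex Hilbert spaces with orthonormal structure, let D ≥ 1 be an integer with standard orthonormal basis e₁,…,e_D of ℂ^D, and define V : H_A ⊗ H_B → (H_A ⊗ ℂ^D) ⊗ (ℂ^D ⊗ H_B) by V(ξ ⊗ η) = D^{−1/2} Σ_{i=1}^{D} (ξ ⊗ e_i) ⊗ (e_i ⊗ η), extended linearly. Then V is a linear isometry, and for every linear operator ρ on H_A ⊗ H_B one has (id_{H_A⊗ℂ^D} ⊗ Tr_{ℂ^D⊗H_B})(V ρ V*) = ((id_{H_A} ⊗ Tr_{H_B})(ρ)) ⊗ (1/D)·Id_{ℂ^D}, where the partial traces are the maps obtained by applying the operator trace on the indicated tensor factor. -/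
open scoped BigOperators Kronecker
open Matrix

/-- Elementary tensor of two vectors, in the identification
`ℂ^ι ⊗ ℂ^κ ≅ ℂ^(ι × κ)`. -/
def tensVec {ι κ : Type*} (x : ι → ℂ) (y : κ → ℂ) : ι × κ → ℂ := fun p => x p.1 * y p.2

/-- The standard basis vector `e_s` of `ℂ^ι`. -/
def stdVec {ι : Type*} [DecidableEq ι] (s : ι) : ι → ℂ := fun i => if i = s then 1 else 0

/-- The partial trace over the second tensor factor:
`(id ⊗ Tr)(ρ) i j = ∑ s, ρ (i,s) (j,s)`. -/
noncomputable def ptraceRight {α β : Type*} [Fintype β] (ρ : Matrix (α × β) (α × β) ℂ) : Matrix α α ℂ :=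
  fun i j => ∑ s, ρ (i, s) (j, s)

/-- The partial trace over the first tensor factor:
`(Tr ⊗ id)(ρ) i j = ∑ s, ρ (s,i) (s,j)`. -/
noncomputable def ptraceLeft {α β : Type*} [Fintype α] (ρ : Matrix (α × β) (α × β) ℂ) : Matrix β β ℂ :=
  fun i j => ∑ s, ρ (s, i) (s, j)

/-- The matrix of the map `V : H_A ⊗ H_B → (H_A ⊗ ℂ^D) ⊗ (ℂ^D ⊗ H_B)` determined by
`V(ξ ⊗ η) = D^{−1/2} ∑_{s=1}^{D} (ξ ⊗ e_s) ⊗ (e_s ⊗ η)`, with `H_A = ℂ^a`, `H_B = ℂ^b`. -/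
noncomputable def Vmat (a b D : ℕ) :
    Matrix ((Fin a × Fin D) × (Fin D × Fin b)) (Fin a × Fin b) ℂ :=
  fun p q =>
    if p.1.1 = q.1 ∧ p.2.2 = q.2 ∧ p.1.2 = p.2.1 then ((Real.sqrt D)⁻¹ : ℝ) else 0

/-! Up to the factor `D^{−1/2}`, the rows of `V` indexed by `((i, s), (s, j))` are those of the
identity on `H_A ⊗ H_B`, one copy for each `s`, and all other rows vanish. Hence `V* V` is `1/D`
times the sum of `D` copies of the identity. In the partial trace of `V ρ V*` over `ℂ^D ⊗ H_B`,
the traced index `s` of the second `ℂ^D` is forced to agree with both the row and the column index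
of the first one, which leaves the identity on `ℂ^D`. -/

theorem norm_toEuclideanLin_of_conjTranspose_mul_self_eq_one {𝕜 m n : Type*} [RCLike 𝕜]
    [Fintype m] [Fintype n] [DecidableEq n] {A : Matrix m n 𝕜} (hA : Aᴴ * A = 1)
    (x : EuclideanSpace 𝕜 n) : ‖Matrix.toEuclideanLin A x‖ = ‖x‖ := by
  classical
  have adjoint_apply_self :
      (Matrix.toEuclideanLin A).adjoint (Matrix.toEuclideanLin A x) = x := by
    rw [← Matrix.toEuclideanLin_conjTranspose_eq_adjoint]
    simp only [Matrix.toLpLin_apply, Matrix.mulVec_mulVec, hA, Matrix.one_mulVec]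
  rw [@norm_eq_sqrt_re_inner 𝕜, ← LinearMap.adjoint_inner_right, adjoint_apply_self,
    ← norm_eq_sqrt_re_inner]

theorem inv_sqrt_natCast_mul_star_self (n : ℕ) :
    ((Real.sqrt n)⁻¹ : ℂ) * star ((Real.sqrt n)⁻¹ : ℂ) = (n : ℂ)⁻¹ := by
  rw [← Complex.ofReal_inv]
  simp [← mul_inv, ← Complex.ofReal_mul]

theorem ptraceRight_smul {α β : Type*} [Fintype β] (c : ℂ) (ρ : Matrix (α × β) (α × β) ℂ) :
    ptraceRight (c • ρ) = c • ptraceRight ρ := by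
  ext i j
  simp only [ptraceRight, Matrix.smul_apply, Finset.smul_sum]

/-- The map `ξ ⊗ η ↦ ∑ s, (ξ ⊗ e_s) ⊗ (e_s ⊗ η)` inserting the unnormalized maximally entangled
vector of `R^δ ⊗ R^δ` between two tensor factors, as a matrix with entries `0` and `1`. It is
encoded by rows: the row of `((i, s), (t, j))` is the row `(i, j)` of the identity when `s = t`,
and zero otherwise. -/
def diagInsertion (α β δ R : Type*) [DecidableEq α] [DecidableEq β] [DecidableEq δ]
    [Zero R] [One R] : Matrix ((α × δ) × (δ × β)) (α × β) R :=
  fun p q => if p.1.2 = p.2.1 then (1 : Matrix (α × β) (α × β) R) (p.1.1, p.2.2) q else 0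

section DiagInsertion

variable {α β δ R : Type*} [DecidableEq α] [DecidableEq β] [DecidableEq δ]
  [Fintype α] [Fintype β]

theorem diagInsertion_mul_apply [NonAssocSemiring R] {γ : Type*}
    (M : Matrix (α × β) γ R) (p : (α × δ) × (δ × β)) (k : γ) :
    (diagInsertion α β δ R * M) p k = if p.1.2 = p.2.1 then M (p.1.1, p.2.2) k else 0 := by
  split_ifs with h <;> simp [Matrix.mul_apply, diagInsertion, h, Matrix.one_apply]

theorem diagInsertion_mulVec_apply [NonAssocSemiring R]
    (x : α × β → R) (p : (α × δ) × (δ × β)) :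
    (diagInsertion α β δ R *ᵥ x) p = if p.1.2 = p.2.1 then x (p.1.1, p.2.2) else 0 :=
  diagInsertion_mul_apply (Matrix.replicateCol Unit x) p ()

theorem mul_conjTranspose_diagInsertion_apply [NonAssocSemiring R] [StarRing R] {γ : Type*}
    (M : Matrix γ (α × β) R) (k : γ) (p : (α × δ) × (δ × β)) :
    (M * (diagInsertion α β δ R)ᴴ) k p = if p.1.2 = p.2.1 then M k (p.1.1, p.2.2) else 0 := by
  rw [← Matrix.conjTranspose_conjTranspose M, ← Matrix.conjTranspose_mul,
    Matrix.conjTranspose_apply, diagInsertion_mul_apply, apply_ite star, star_zero,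
    Matrix.conjTranspose_apply Mᴴ]

theorem conjTranspose_diagInsertion_mul_self [Fintype δ] [NonAssocSemiring R] [StarRing R] :
    (diagInsertion α β δ R)ᴴ * diagInsertion α β δ R = (Fintype.card δ : R) • 1 := by
  ext q q'
  calc ((diagInsertion α β δ R)ᴴ * diagInsertion α β δ R) q q'
      = ∑ i : α, ∑ s : δ, ∑ t : δ, ∑ j : β, if s = t then
          (1 : Matrix (α × β) (α × β) R)ᴴ q (i, j) * (1 : Matrix (α × β) (α × β) R) (i, j) q'
          else 0 := by
        simp only [Matrix.mul_apply, Fintype.sum_prod_type, Matrix.conjTranspose_apply,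
          diagInsertion, apply_ite star, star_zero, ite_zero_mul_ite_zero, and_self]
    _ = ∑ _s : δ, ((1 : Matrix (α × β) (α × β) R)ᴴ * (1 : Matrix (α × β) (α × β) R)) q q' := by
        rw [Finset.sum_comm]
        simp only [Matrix.mul_apply, Fintype.sum_prod_type, Finset.sum_ite_irrel,
          Finset.sum_const_zero, Finset.sum_ite_eq, Finset.mem_univ, if_true]
    _ = ((Fintype.card δ : R) • (1 : Matrix (α × β) (α × β) R)) q q' := by
        simp

theorem diagInsertion_mulVec_tensVec [Fintype δ] (ξ : α → ℂ) (η : β → ℂ) :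
    diagInsertion α β δ ℂ *ᵥ tensVec ξ η =
      ∑ s : δ, tensVec (tensVec ξ (stdVec s)) (tensVec (stdVec s) η) := by
  ext ⟨⟨i, s⟩, ⟨t, j⟩⟩
  simp [diagInsertion_mulVec_apply, tensVec, stdVec]

theorem ptraceRight_diagInsertion_conj [Fintype δ] (ρ : Matrix (α × β) (α × β) ℂ) :
    ptraceRight (diagInsertion α β δ ℂ * ρ * (diagInsertion α β δ ℂ)ᴴ) =
      ptraceRight ρ ⊗ₖ (1 : Matrix δ δ ℂ) := by
  ext ⟨i, s⟩ ⟨i', s'⟩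
  calc ptraceRight (diagInsertion α β δ ℂ * ρ * (diagInsertion α β δ ℂ)ᴴ) (i, s) (i', s')
      = ∑ t : δ, ∑ j : β, if s' = t then if s = t then ρ (i, j) (i', j) else 0 else 0 := by
        simp only [ptraceRight, mul_conjTranspose_diagInsertion_apply, diagInsertion_mul_apply,
          Fintype.sum_prod_type]
    _ = (ptraceRight ρ ⊗ₖ (1 : Matrix δ δ ℂ)) (i, s) (i', s') := by
        simp [ptraceRight, Matrix.one_apply]

end DiagInsertion

/-- The map `ξ ⊗ η ↦ |δ|^{−1/2} ∑ s, (ξ ⊗ e_s) ⊗ (e_s ⊗ η)`, i.e. `V` for arbitrary finite index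
types, such as the multi-indices of a tensor power. -/
noncomputable def maxEntangledInsertion (α β δ : Type*) [DecidableEq α] [DecidableEq β]
    [DecidableEq δ] [Fintype δ] : Matrix ((α × δ) × (δ × β)) (α × β) ℂ :=
  ((Real.sqrt (Fintype.card δ))⁻¹ : ℂ) • diagInsertion α β δ ℂ

section MaxEntangledInsertion

variable {α β δ : Type*} [DecidableEq α] [DecidableEq β] [DecidableEq δ]
  [Fintype α] [Fintype β] [Fintype δ]

theorem conjTranspose_maxEntangledInsertion_mul_self [Nonempty δ] :
    (maxEntangledInsertion α β δ)ᴴ * maxEntangledInsertion α β δ = 1 := by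
  have card_ne_zero : (Fintype.card δ : ℂ) ≠ 0 := Nat.cast_ne_zero.mpr Fintype.card_ne_zero
  rw [maxEntangledInsertion, Matrix.conjTranspose_smul, Matrix.smul_mul, Matrix.mul_smul,
    conjTranspose_diagInsertion_mul_self, smul_smul, smul_smul, mul_comm (star _),
    inv_sqrt_natCast_mul_star_self, inv_mul_cancel₀ card_ne_zero, one_smul]

theorem ptraceRight_maxEntangledInsertion_conj (ρ : Matrix (α × β) (α × β) ℂ) :
    ptraceRight (maxEntangledInsertion α β δ * ρ * (maxEntangledInsertion α β δ)ᴴ) =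
      ptraceRight ρ ⊗ₖ ((Fintype.card δ : ℂ)⁻¹ • (1 : Matrix δ δ ℂ)) := by
  rw [maxEntangledInsertion, Matrix.conjTranspose_smul, Matrix.smul_mul, Matrix.smul_mul,
    Matrix.mul_smul, smul_smul, inv_sqrt_natCast_mul_star_self, ptraceRight_smul,
    ptraceRight_diagInsertion_conj, Matrix.kronecker_smul]

end MaxEntangledInsertion

theorem Vmat_isometry_and_partialTrace_general (α β δ : Type*) [DecidableEq α] [DecidableEq β]
    [DecidableEq δ] [Fintype α] [Fintype β] [Fintype δ] [Nonempty δ] :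
    (∀ (ξ : α → ℂ) (η : β → ℂ),
        (maxEntangledInsertion α β δ).mulVec (tensVec ξ η) =
          ((Real.sqrt (Fintype.card δ))⁻¹ : ℂ) •
            ∑ s : δ, tensVec (tensVec ξ (stdVec s)) (tensVec (stdVec s) η)) ∧
    (∀ ξ : EuclideanSpace ℂ (α × β),
        ‖Matrix.toEuclideanLin (maxEntangledInsertion α β δ) ξ‖ = ‖ξ‖) ∧
    (∀ ρ : Matrix (α × β) (α × β) ℂ,
        ptraceRight (maxEntangledInsertion α β δ * ρ * (maxEntangledInsertion α β δ)ᴴ) =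
          ptraceRight ρ ⊗ₖ ((Fintype.card δ : ℂ)⁻¹ • (1 : Matrix δ δ ℂ))) := by
  refine ⟨fun ξ η => ?_, ?_, ptraceRight_maxEntangledInsertion_conj⟩
  · rw [maxEntangledInsertion, Matrix.smul_mulVec, diagInsertion_mulVec_tensVec]
  · exact norm_toEuclideanLin_of_conjTranspose_mul_self_eq_one
      conjTranspose_maxEntangledInsertion_mul_self

theorem Vmat_eq_maxEntangledInsertion (a b D : ℕ) :
    Vmat a b D = maxEntangledInsertion (Fin a) (Fin b) (Fin D) := by
  ext ⟨⟨i, s⟩, ⟨t, j⟩⟩ ⟨i', j'⟩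
  simp [Vmat, maxEntangledInsertion, diagInsertion, Matrix.one_apply, ← ite_and, and_comm,
    and_assoc]

/-- `V(ξ ⊗ η) = D^{−1/2} ∑_s (ξ ⊗ e_s) ⊗ (e_s ⊗ η)`; `V` is a linear isometry; and
`(id_{H_A⊗ℂ^D} ⊗ Tr_{ℂ^D⊗H_B})(V ρ V*) = ((id_{H_A} ⊗ Tr_{H_B})(ρ)) ⊗ (1/D)·Id_{ℂ^D}`
for every operator `ρ` on `H_A ⊗ H_B`. -/
theorem Vmat_isometry_and_partialTrace (a b D : ℕ) (ha : 0 < a) (hb : 0 < b) (hD : 1 ≤ D) :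
    (∀ (ξ : Fin a → ℂ) (η : Fin b → ℂ),
        (Vmat a b D).mulVec (tensVec ξ η) =
          ((Real.sqrt D)⁻¹ : ℂ) •
            ∑ s : Fin D, tensVec (tensVec ξ (stdVec s)) (tensVec (stdVec s) η)) ∧
    (∀ ξ : EuclideanSpace ℂ (Fin a × Fin b),
        ‖Matrix.toEuclideanLin (Vmat a b D) ξ‖ = ‖ξ‖) ∧
    (∀ ρ : Matrix (Fin a × Fin b) (Fin a × Fin b) ℂ,
        ptraceRight (Vmat a b D * ρ * (Vmat a b D)ᴴ) =
          ptraceRight ρ ⊗ₖ (((D : ℂ)⁻¹) • (1 : Matrix (Fin D) (Fin D) ℂ))) := by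
  have : NeZero D := ⟨Nat.one_le_iff_ne_zero.mp hD⟩
  simpa only [Vmat_eq_maxEntangledInsertion, Fintype.card_fin] using
    Vmat_isometry_and_partialTrace_general (Fin a) (Fin b) (Fin D)
end

section
/- Let H_A and H_B be nontrivial finite-dimensional complex Hilbert spaces, let D ≥ 1 be an integer with standard orthonormal basis e₁,…,e_D of ℂ^D, and define V : H_A ⊗ H_B → (H_A ⊗ ℂ^D) ⊗ (ℂ^D ⊗ H_B) by V(ξ ⊗ η) = D^{−1/2} Σ_{i=1}^{D} (ξ ⊗ e_i) ⊗ (e_i ⊗ η), extended linearly. Then for every linear operator ρ on H_A ⊗ H_B one has (Tr_{H_A⊗ℂ^D} ⊗ id_{ℂ^D⊗H_B})(V ρ V*) = (1/D)·Id_{ℂ^D} ⊗ ((Tr_{H_A} ⊗ id_{H_B})(ρ)), where the partial traces are the maps obtained by applying the operator trace on the indicated tensor factor. -/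
open scoped BigOperators Kronecker
open Matrix

/-! `V` tensors its argument with the fixed vector `ω = D^{−1/2} ∑ₛ eₛ ⊗ eₛ` and moves the two legs
of `ω` between `H_A` and `H_B`. Up to this reordering of factors `V ρ V*` is therefore `|ω⟩⟨ω| ⊗ ρ`,
whose partial trace factors as `Tr₁ |ω⟩⟨ω| ⊗ Tr_A ρ`. Writing `ω = ∑ₛ ∑ₜ K t s • eₛ ⊗ eₜ`,
the first factor is `K Kᴴ`, and here `K = D^{−1/2} • 1`. -/

section InsertVec

variable {α β γ δ : Type*}

/-- The reordering of tensor factors `(A ⊗ C) ⊗ (C' ⊗ B) ≅ (C ⊗ C') ⊗ (A ⊗ B)`, as a bijection of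
the indices of the standard bases. It compares `V ρ V*` with a Kronecker product. -/
def innerOuterEquiv : (α × γ) × (δ × β) ≃ (γ × δ) × (α × β) where
  toFun p := ((p.1.2, p.2.1), (p.1.1, p.2.2))
  invFun q := ((q.2.1, q.1.1), (q.1.2, q.2.2))

/-- The matrix of the map `A ⊗ B → (A ⊗ C) ⊗ (C' ⊗ B)` that inserts a fixed vector `ω` of `C ⊗ C'`
between the two tensor factors; `Vmat` is the case of a maximally entangled `ω`. -/
def insertVec (α β : Type*) [DecidableEq α] [DecidableEq β] (ω : γ × δ → ℂ) :
    Matrix ((α × γ) × (δ × β)) (α × β) ℂ :=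
  fun p q => ω (innerOuterEquiv p).1 * (1 : Matrix (α × β) (α × β) ℂ) (innerOuterEquiv p).2 q

theorem ptraceLeft_kronecker_submatrix_innerOuterEquiv [Fintype α] [Fintype γ]
    (σ : Matrix (γ × δ) (γ × δ) ℂ) (ρ : Matrix (α × β) (α × β) ℂ) :
    ptraceLeft ((σ ⊗ₖ ρ).submatrix innerOuterEquiv innerOuterEquiv) =
      ptraceLeft σ ⊗ₖ ptraceLeft ρ := by
  ext ⟨t, y⟩ ⟨t', y'⟩
  calc
    _ = ∑ x, ∑ s, σ (s, t) (s, t') * ρ (x, y) (x, y') := Fintype.sum_prod_type _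
    _ = ∑ s, ∑ x, σ (s, t) (s, t') * ρ (x, y) (x, y') := Finset.sum_comm
    _ = _ := (Finset.sum_mul_sum _ _ _ _).symm

theorem ptraceLeft_vecMulVec_vec [Fintype γ] (K : Matrix δ γ ℂ) :
    ptraceLeft (vecMulVec (vec K) (star (vec K))) = K * Kᴴ :=
  rfl

variable [DecidableEq α] [DecidableEq β] [Fintype α] [Fintype β]

theorem insertVec_mulVec (ω : γ × δ → ℂ) (v : α × β → ℂ) :
    insertVec α β ω *ᵥ v = tensVec ω v ∘ innerOuterEquiv := by
  ext p
  simp only [mulVec, dotProduct, insertVec, mul_assoc, ← Finset.mul_sum, one_apply, ite_mul,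
    one_mul, zero_mul, Finset.sum_ite_eq, Finset.mem_univ, if_true, tensVec, Function.comp_apply]

theorem insertVec_mulVec_tensVec [Fintype γ] [Fintype δ] [DecidableEq γ] [DecidableEq δ]
    (ω : γ × δ → ℂ) (ξ : α → ℂ) (η : β → ℂ) :
    insertVec α β ω *ᵥ tensVec ξ η =
      ∑ s, ∑ t, ω (s, t) • tensVec (tensVec ξ (stdVec s)) (tensVec (stdVec t) η) := by
  ext ⟨⟨x, s⟩, ⟨t, y⟩⟩
  rw [insertVec_mulVec]
  simp [tensVec, stdVec, innerOuterEquiv]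

theorem insertVec_mul_apply {κ : Type*} (ω : γ × δ → ℂ) (M : Matrix (α × β) κ ℂ)
    (p : (α × γ) × (δ × β)) (k : κ) :
    (insertVec α β ω * M) p k = ω (innerOuterEquiv p).1 * M (innerOuterEquiv p).2 k :=
  congrFun (insertVec_mulVec ω (M.col k)) p

theorem insertVec_mul_mul_conjTranspose (ω : γ × δ → ℂ) (ρ : Matrix (α × β) (α × β) ℂ) :
    insertVec α β ω * ρ * (insertVec α β ω)ᴴ =
      (vecMulVec ω (star ω) ⊗ₖ ρ).submatrix innerOuterEquiv innerOuterEquiv := by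
  have mul_conjTranspose_eq : ρ * (insertVec α β ω)ᴴ = (insertVec α β ω * ρᴴ)ᴴ := by
    rw [conjTranspose_mul, conjTranspose_conjTranspose]
  ext p q
  rw [Matrix.mul_assoc, mul_conjTranspose_eq, insertVec_mul_apply, conjTranspose_apply,
    insertVec_mul_apply, conjTranspose_apply, star_mul', star_star, ← mul_assoc]
  rfl

theorem Vmat_partialTrace_left_general [Fintype γ] [Fintype δ] [DecidableEq γ] [DecidableEq δ]
    (K : Matrix δ γ ℂ) :
    (∀ (ξ : α → ℂ) (η : β → ℂ),
        insertVec α β (vec K) *ᵥ tensVec ξ η =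
          ∑ s, ∑ t, K t s • tensVec (tensVec ξ (stdVec s)) (tensVec (stdVec t) η)) ∧
    (∀ ρ : Matrix (α × β) (α × β) ℂ,
        ptraceLeft (insertVec α β (vec K) * ρ * (insertVec α β (vec K))ᴴ) =
          (K * Kᴴ) ⊗ₖ ptraceLeft ρ) := by
  refine ⟨insertVec_mulVec_tensVec (vec K), fun ρ => ?_⟩
  rw [insertVec_mul_mul_conjTranspose, ptraceLeft_kronecker_submatrix_innerOuterEquiv,
    ptraceLeft_vecMulVec_vec]

end InsertVec

theorem Vmat_eq_insertVec (a b D : ℕ) :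
    Vmat a b D =
      insertVec (Fin a) (Fin b) (vec (((Real.sqrt D)⁻¹ : ℂ) • (1 : Matrix (Fin D) (Fin D) ℂ))) := by
  ext ⟨⟨x, s⟩, ⟨t, y⟩⟩ ⟨x', y'⟩
  simp only [Vmat, insertVec, innerOuterEquiv, Equiv.coe_fn_mk, vec, Matrix.smul_apply, one_apply,
    smul_eq_mul, Prod.mk.injEq, mul_ite, mul_one, mul_zero, Complex.ofReal_inv, eq_comm (a := t),
    ← ite_and, and_assoc]

theorem inv_sqrt_smul_one_mul_conjTranspose (n : Type*) [Fintype n] [DecidableEq n] (D : ℕ) :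
    (((Real.sqrt D)⁻¹ : ℂ) • (1 : Matrix n n ℂ)) * (((Real.sqrt D)⁻¹ : ℂ) • (1 : Matrix n n ℂ))ᴴ =
      ((D : ℂ)⁻¹) • (1 : Matrix n n ℂ) := by
  have inv_sqrt_mul_star : ((Real.sqrt D)⁻¹ : ℂ) * star ((Real.sqrt D)⁻¹ : ℂ) = (D : ℂ)⁻¹ := by
    rw [star_inv₀, Complex.star_def, Complex.conj_ofReal, ← mul_inv, ← Complex.ofReal_mul,
      Real.mul_self_sqrt (Nat.cast_nonneg D), Complex.ofReal_natCast]
  rw [conjTranspose_smul, conjTranspose_one, smul_mul_smul_comm, mul_one, inv_sqrt_mul_star]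

/-- With `V(ξ ⊗ η) = D^{−1/2} ∑_s (ξ ⊗ e_s) ⊗ (e_s ⊗ η)`, one has
`(Tr_{H_A⊗ℂ^D} ⊗ id_{ℂ^D⊗H_B})(V ρ V*) = (1/D)·Id_{ℂ^D} ⊗ ((Tr_{H_A} ⊗ id_{H_B})(ρ))`
for every operator `ρ` on `H_A ⊗ H_B`. -/
theorem Vmat_partialTrace_left (a b D : ℕ) (ha : 0 < a) (hb : 0 < b) (hD : 1 ≤ D) :
    (∀ (ξ : Fin a → ℂ) (η : Fin b → ℂ),
        (Vmat a b D).mulVec (tensVec ξ η) =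
          ((Real.sqrt D)⁻¹ : ℂ) •
            ∑ s : Fin D, tensVec (tensVec ξ (stdVec s)) (tensVec (stdVec s) η)) ∧
    (∀ ρ : Matrix (Fin a × Fin b) (Fin a × Fin b) ℂ,
        ptraceLeft (Vmat a b D * ρ * (Vmat a b D)ᴴ) =
          (((D : ℂ)⁻¹) • (1 : Matrix (Fin D) (Fin D) ℂ)) ⊗ₖ ptraceLeft ρ) := by
  rw [Vmat_eq_insertVec]
  obtain ⟨mulVec_eq, ptraceLeft_eq⟩ := Vmat_partialTrace_left_general (α := Fin a) (β := Fin b)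
    (((Real.sqrt D)⁻¹ : ℂ) • (1 : Matrix (Fin D) (Fin D) ℂ))
  refine ⟨fun ξ η => ?_, fun ρ => ?_⟩
  · simp only [mulVec_eq, Matrix.smul_apply, one_apply, smul_eq_mul, mul_ite, mul_one, mul_zero,
      ite_smul, zero_smul, Finset.sum_ite_eq', Finset.mem_univ, if_true, Finset.smul_sum]
  · rw [ptraceLeft_eq, inv_sqrt_smul_one_mul_conjTranspose]
end
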